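/- arXiv:2312.07339 — 5 statements merged into one kernel-verified Lean document; each statement's English description precedes it below -/
import Mathlib

section
/- Let R be a commutative ring, τ ∈ R a unit, B an m×m matrix over R, v, w ∈ R^m column vectors, and x ∈ R. Let B̃ be the (m+2)×(m+2) block matrix whose top-left m×m block is B, whose (m+1)-st column (in the first m rows) is v, whose (m+2)-nd column (in the first m rows) is 0, whose (m+1)-st row is (wᵀ, x, 1), and whose (m+2)-nd row is zero. Then the cokernel of τB̃ − B̃ᵀ is isomorphic, as an R-module, to the cokernel of τB − Bᵀ. -/
open Matrix

/-- The cokernel of a square matrix `A` over a commutative ring, i.e. the quotient of `R^m`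
by the submodule generated by the columns of `A`. -/
abbrev matCoker {R : Type*} [CommRing R] {m : ℕ} (A : Matrix (Fin m) (Fin m) R) : Type _ :=
  (Fin m → R) ⧸ LinearMap.range A.mulVecLin

/-- The `(m+2) × (m+2)` block matrix with top-left `m × m` block `B`, `(m+1)`-st column `v`
(in the first `m` rows), `(m+2)`-nd column `0` (in the first `m` rows), `(m+1)`-st row
`(wᵀ, x, 1)`, and `(m+2)`-nd row zero. -/
def tildeMat {R : Type*} [CommRing R] {m : ℕ} (B : Matrix (Fin m) (Fin m) R)
    (v w : Fin m → R) (x : R) : Matrix (Fin (m + 2)) (Fin (m + 2)) R :=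
  Matrix.of fun i j =>
    if hi : (i : ℕ) < m then
      if hj : (j : ℕ) < m then B ⟨i, hi⟩ ⟨j, hj⟩
      else if (j : ℕ) = m then v ⟨i, hi⟩
      else 0
    else if (i : ℕ) = m then
      if hj : (j : ℕ) < m then w ⟨j, hj⟩
      else if (j : ℕ) = m then x
      else 1
    else 0

/-- The surjection from the large free module onto the small one. -/
def cokerAuxMap {R : Type*} [CommRing R] {m : ℕ} (u : Fin m → R) :
    (Fin (m + 2) → R) →ₗ[R] (Fin m → R) where
  toFun f := fun i => f i.castSucc.castSucc + f (Fin.last (m + 1)) * u i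
  map_add' f g := by ext i; simp; ring
  map_smul' c f := by ext i; simp; ring

lemma tildeMat_mulVec_top {R : Type*} [CommRing R] (τ : R) {m : ℕ}
    (B : Matrix (Fin m) (Fin m) R) (v w : Fin m → R) (x : R) (f : Fin (m + 2) → R) (i : Fin m) :
    ((τ • tildeMat B v w x - (tildeMat B v w x)ᵀ) *ᵥ f) i.castSucc.castSucc =
      ((τ • B - Bᵀ) *ᵥ fun j => f j.castSucc.castSucc) i
        + f (Fin.last m).castSucc * (τ * v i - w i) := by
  simp [Matrix.mulVec, dotProduct, Fin.sum_univ_castSucc, tildeMat]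
  ring

lemma tildeMat_mulVec_mid {R : Type*} [CommRing R] (τ : R) {m : ℕ}
    (B : Matrix (Fin m) (Fin m) R) (v w : Fin m → R) (x : R) (f : Fin (m + 2) → R) :
    ((τ • tildeMat B v w x - (tildeMat B v w x)ᵀ) *ᵥ f) (Fin.last m).castSucc =
      (∑ j, (τ * w j - v j) * f j.castSucc.castSucc)
        + (τ * x - x) * f (Fin.last m).castSucc + τ * f (Fin.last (m + 1)) := by
  simp [Matrix.mulVec, dotProduct, Fin.sum_univ_castSucc, tildeMat]

lemma tildeMat_mulVec_last {R : Type*} [CommRing R] (τ : R) {m : ℕ}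
    (B : Matrix (Fin m) (Fin m) R) (v w : Fin m → R) (x : R) (f : Fin (m + 2) → R) :
    ((τ • tildeMat B v w x - (tildeMat B v w x)ᵀ) *ᵥ f) (Fin.last (m + 1)) =
      - f (Fin.last m).castSucc := by
  have h (j : Fin m) : ¬ (m + 1 < (j : ℕ)) := by omega
  simp [Matrix.mulVec, dotProduct, Fin.sum_univ_castSucc, tildeMat]

theorem coker_tildeMat {R : Type*} [CommRing R] (τ : R) (hτ : IsUnit τ) {m : ℕ}
    (B : Matrix (Fin m) (Fin m) R) (v w : Fin m → R) (x : R) :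
    Nonempty (matCoker (τ • tildeMat B v w x - (tildeMat B v w x)ᵀ) ≃ₗ[R]
      matCoker (τ • B - Bᵀ)) := by
  obtain ⟨t, rfl⟩ := hτ
  let τ : R := t
  let φ : (Fin (m + 2) → R) →ₗ[R] matCoker (τ • B - Bᵀ) :=
    (LinearMap.range (τ • B - Bᵀ).mulVecLin).mkQ ∘ₗ cokerAuxMap (fun i => τ * v i - w i)
  have hsurj : Function.Surjective φ := by
    refine (Submodule.mkQ_surjective _).comp fun p => ?_
    refine ⟨Fin.snoc (α := fun _ => R) (Fin.snoc (α := fun _ => R) p 0) 0, ?_⟩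
    ext i
    simp [cokerAuxMap]
  have hker : LinearMap.range (τ • tildeMat B v w x - (tildeMat B v w x)ᵀ).mulVecLin
      = LinearMap.ker φ := by
    ext f
    simp only [φ, LinearMap.mem_ker, LinearMap.comp_apply, Submodule.mkQ_apply,
      Submodule.Quotient.mk_eq_zero, LinearMap.mem_range, Matrix.mulVecLin_apply]
    constructor
    · rintro ⟨g, rfl⟩
      refine ⟨fun j => g j.castSucc.castSucc, ?_⟩
      ext i
      simp only [cokerAuxMap, LinearMap.coe_mk, AddHom.coe_mk, tildeMat_mulVec_top,
        tildeMat_mulVec_last]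
      ring
    · rintro ⟨a, ha⟩
      let b : R := - f (Fin.last (m + 1))
      let c : R := (↑t⁻¹ : R) *
        (f (Fin.last m).castSucc - (∑ j, (τ * w j - v j) * a j) - (τ * x - x) * b)
      refine ⟨Fin.snoc (α := fun _ => R) (Fin.snoc (α := fun _ => R) a b) c, ?_⟩
      ext i
      refine Fin.lastCases ?_ (fun i => Fin.lastCases ?_ (fun i => ?_) i) i
      · rw [tildeMat_mulVec_last]
        simp [b]
      · rw [tildeMat_mulVec_mid]
        simp only [Fin.snoc_castSucc, Fin.snoc_last, c, τ, Units.mul_inv_cancel_left]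
        ring
      · rw [tildeMat_mulVec_top]
        have := congrFun ha i
        simp only [cokerAuxMap, LinearMap.coe_mk, AddHom.coe_mk] at this
        simp only [Fin.snoc_castSucc, Fin.snoc_last, this, b]
        ring
  exact ⟨(Submodule.quotEquivOfEq _ _ hker).trans (φ.quotKerEquivOfSurjective hsurj)⟩
end

section
/- Let a, b be integers and let A(a,b) be the 4×4 integer matrix with rows (−1, 1, 0, 0), (0, −1, 0, 0), (0, 0, −1, 1), (a, b, 0, −1). Then in the polynomial ring ℤ[X] one has det(X·A(a,b) − A(a,b)ᵀ) = (X² − X + 1)² + (a² + ab + b²)·X·(X − 1)². Equivalently, the Alexander polynomial determined by the Seifert matrix A(a,b) is Δ_d(t) = (t⁻¹ − 1 + t)² + d·(t⁻¹ − 2 + t) with d = a² + ab + b². -/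
open Matrix Polynomial

theorem alexander_poly_two_trefoil_plumbing (a b : ℤ) :
    Matrix.det
      ((X : ℤ[X]) • (!![-1, 1, 0, 0; 0, -1, 0, 0; 0, 0, -1, 1; a, b, 0, -1]).map
          (Polynomial.C : ℤ → ℤ[X]) -
        ((!![-1, 1, 0, 0; 0, -1, 0, 0; 0, 0, -1, 1; a, b, 0, -1]).map
          (Polynomial.C : ℤ → ℤ[X]))ᵀ) =
      (X ^ 2 - X + 1) ^ 2 +
        Polynomial.C (a ^ 2 + a * b + b ^ 2) * X * (X - 1) ^ 2 := by
  simp [Matrix.det_succ_row_zero, Fin.sum_univ_succ, Fin.succAbove, Matrix.submatrix_apply]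
  ring
end

section
/- Let ω = e^{0.11πi} ∈ ℂ and let M be the 3×3 complex matrix with rows (−1, 1, 0), (0, −1, 0), (0, 0, −1). Then the matrix H = (1 − ω)·M + (1 − ω̄)·Mᵀ is Hermitian and has exactly one positive eigenvalue and two negative eigenvalues (counted with multiplicity). -/
open Matrix Complex

theorem hermitian_3x3_aux_count (f : Fin 3 → ℝ) (hs : f 0 + f 1 + f 2 < 0)
    (hp : 0 < f 0 * f 1 * f 2) :
    (Finset.univ.filter fun i : Fin 3 => 0 < f i).card = 1 ∧
      (Finset.univ.filter fun i : Fin 3 => f i < 0).card = 2 := by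
  have h0 : f 0 ≠ 0 := by rintro h; simp [h] at hp
  have h1 : f 1 ≠ 0 := by rintro h; simp [h] at hp
  have h2 : f 2 ≠ 0 := by rintro h; simp [h] at hp
  simp only [Finset.card_filter, Fin.sum_univ_three]
  rcases lt_or_gt_of_ne h0 with a | a <;> rcases lt_or_gt_of_ne h1 with b | b <;>
    rcases lt_or_gt_of_ne h2 with c | c
  · exact absurd hp (not_lt.2 (mul_neg_of_pos_of_neg (mul_pos_of_neg_of_neg a b) c).le)
  · simp [a, b, c, a.le, b.le, c.le, not_lt.2]
  · simp [a, b, c, a.le, b.le, c.le, not_lt.2]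
  · exact absurd hp (not_lt.2 (mul_neg_of_neg_of_pos (mul_neg_of_neg_of_pos a b) c).le)
  · simp [a, b, c, a.le, b.le, c.le, not_lt.2]
  · exact absurd hp (not_lt.2 (mul_neg_of_neg_of_pos (mul_neg_of_pos_of_neg a b) c).le)
  · exact absurd hp (not_lt.2 (mul_neg_of_pos_of_neg (mul_pos a b) c).le)
  · linarith

theorem hermitian_3x3_one_pos_two_neg :
    ∀ ω : ℂ, ω = Complex.exp ((0.11 * Real.pi : ℝ) * Complex.I) →
    ∀ M : Matrix (Fin 3) (Fin 3) ℂ, M = !![-1, 1, 0; 0, -1, 0; 0, 0, -1] →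
    ∃ hH : ((1 - ω) • M + (1 - (starRingEnd ℂ) ω) • Mᵀ).IsHermitian,
      (Finset.univ.filter fun i : Fin 3 => 0 < hH.eigenvalues i).card = 1 ∧
      (Finset.univ.filter fun i : Fin 3 => hH.eigenvalues i < 0).card = 2 := by
  intro ω hω M hM
  have hH : ((1 - ω) • M + (1 - (starRingEnd ℂ) ω) • Mᵀ).IsHermitian := by
    subst hM
    ext i j
    fin_cases i <;> fin_cases j <;> simp [Matrix.conjTranspose_apply] <;> ring
  refine ⟨hH, ?_⟩
  have hpi := Real.pi_pos
  set θ : ℝ := 0.11 * Real.pi with hθ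
  have hre : ω.re = Real.cos θ := by rw [hω, Complex.exp_ofReal_mul_I_re]
  have him : ω.im = Real.sin θ := by rw [hω, Complex.exp_ofReal_mul_I_im]
  have hc1 : 1 / 2 < Real.cos θ := by
    rw [← Real.cos_pi_div_three]
    apply Real.cos_lt_cos_of_nonneg_of_le_pi <;> (norm_num at hθ; linarith)
  have hc2 : Real.cos θ < 1 := by
    rw [← Real.cos_zero]
    apply Real.cos_lt_cos_of_nonneg_of_le_pi <;> (norm_num at hθ; linarith)
  have hsq := Real.sin_sq_add_cos_sq θ
  have htr := hH.trace_eq_sum_eigenvalues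
  have hdet := hH.det_eq_prod_eigenvalues
  have htr' := congrArg Complex.re htr
  have hdet' := congrArg Complex.re hdet
  rw [Fin.sum_univ_three] at htr'
  rw [Fin.prod_univ_three, Matrix.det_fin_three] at hdet'
  generalize hH.eigenvalues = f at *
  generalize Real.cos θ = c at *
  generalize Real.sin θ = s at *
  have e : c ^ 2 = 1 - s ^ 2 := by linarith
  simp [hM, Matrix.trace_fin_three, hre, him] at htr' hdet'
  apply hermitian_3x3_aux_count
  · linarith
  · have : f 0 * f 1 * f 2 = (2 - 2 * c) ^ 2 * (1 - (2 - 2 * c)) := by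
      rw [← hdet']
      have e : s ^ 2 = 1 - c ^ 2 := by linarith
      ring_nf
      try rw [e]
      try ring
    rw [this]
    have : 0 < 2 - 2 * c := by linarith
    have : 0 < 1 - (2 - 2 * c) := by linarith
    positivity
end

section
/- Let a, b be integers, d = a² + ab + b², ω = e^{0.11πi} ∈ ℂ, and let A = A(a,b) be the 4×4 matrix with rows (−1, 1, 0, 0), (0, −1, 0, 0), (0, 0, −1, 1), (a, b, 0, −1). Then the determinant of the Hermitian matrix B = (1 − ω)·A + (1 − ω̄)·Aᵀ is the real number (2·cos(0.11π) − 2)²·((2·cos(0.11π) − 1)² + d·(2·cos(0.11π) − 2)). In particular, det B < 0 whenever d ≥ 7. -/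
open Matrix Complex

theorem det_hermitian_two_trefoil_plumbing (a b : ℤ)
    (ω : ℂ) (hω : ω = Complex.exp ((0.11 * Real.pi : ℝ) * Complex.I))
    (A : Matrix (Fin 4) (Fin 4) ℂ)
    (hA : A = !![-1, 1, 0, 0; 0, -1, 0, 0; 0, 0, -1, 1; (a : ℂ), (b : ℂ), 0, -1]) :
    ((1 - ω) • A + (1 - (starRingEnd ℂ) ω) • Aᵀ).det =
      (((2 * Real.cos (0.11 * Real.pi) - 2) ^ 2 *
        ((2 * Real.cos (0.11 * Real.pi) - 1) ^ 2 +
          ((a ^ 2 + a * b + b ^ 2 : ℤ) : ℝ) * (2 * Real.cos (0.11 * Real.pi) - 2)) : ℝ) : ℂ) ∧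
    (7 ≤ a ^ 2 + a * b + b ^ 2 →
      (((1 - ω) • A + (1 - (starRingEnd ℂ) ω) • Aᵀ).det).re < 0) := by
  have key : ((1 - ω) • A + (1 - (starRingEnd ℂ) ω) • Aᵀ).det =
      (((2 * Real.cos (0.11 * Real.pi) - 2) ^ 2 *
        ((2 * Real.cos (0.11 * Real.pi) - 1) ^ 2 +
          ((a ^ 2 + a * b + b ^ 2 : ℤ) : ℝ) * (2 * Real.cos (0.11 * Real.pi) - 2)) : ℝ) : ℂ) := by
    generalize (0.11 * Real.pi : ℝ) = t at hω ⊢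
    have hw : ω = (Real.cos t : ℂ) + (Real.sin t : ℂ) * I := by
      rw [hω, Complex.exp_mul_I, Complex.ofReal_cos, Complex.ofReal_sin]
    have hw' : (starRingEnd ℂ) ω = (Real.cos t : ℂ) - (Real.sin t : ℂ) * I := by
      rw [hw]
      simp only [map_add, map_mul, Complex.conj_ofReal, Complex.conj_I]
      ring
    have hcs : (Real.sin t : ℂ) ^ 2 + (Real.cos t : ℂ) ^ 2 = 1 := by
      exact_mod_cast Real.sin_sq_add_cos_sq t
    have hsum : ω + (starRingEnd ℂ) ω = 2 * (Real.cos t : ℂ) := by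
      rw [hw', hw]; ring
    have hprod : ω * (starRingEnd ℂ) ω = 1 := by
      rw [hw', hw]
      linear_combination hcs - (Real.sin t : ℂ) ^ 2 * Complex.I_sq
    generalize (starRingEnd ℂ) ω = η at *
    have hB : (1 - ω) • A + (1 - η) • Aᵀ =
        !![-(2 - ω - η), 1 - ω, 0, (1 - η) * a;
           1 - η, -(2 - ω - η), 0, (1 - η) * b;
           0, 0, -(2 - ω - η), 1 - ω;
           (1 - ω) * a, (1 - ω) * b, 1 - η, -(2 - ω - η)] := by
      subst hA
      ext i j
      fin_cases i <;> fin_cases j <;> simp <;> ring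
    have hdet : ((1 - ω) • A + (1 - η) • Aᵀ).det =
        ((2 - ω - η) ^ 2 - (1 - ω) * (1 - η)) ^ 2
          - (1 - ω) * (1 - η) * (2 - ω - η) ^ 2 * ((a : ℂ) ^ 2 + a * b + b ^ 2) := by
      rw [hB]
      simp [Matrix.det_succ_row_zero, Fin.sum_univ_succ, Fin.succAbove]
      ring
    have hxy : (1 - ω) * (1 - η) = 2 - 2 * (Real.cos t : ℂ) := by
      linear_combination hprod - hsum
    have hs : 2 - ω - η = 2 - 2 * (Real.cos t : ℂ) := by
      linear_combination - hsum
    rw [hdet, hxy, hs]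
    push_cast
    ring
  refine ⟨key, fun hd => ?_⟩
  rw [key, Complex.ofReal_re]
  have hd' : (7 : ℝ) ≤ ((a ^ 2 + a * b + b ^ 2 : ℤ) : ℝ) := by exact_mod_cast hd
  generalize ((a ^ 2 + a * b + b ^ 2 : ℤ) : ℝ) = d at hd'
  have hc1 : Real.cos (0.11 * Real.pi) < 0.943 := by
    have h1 : Real.cos (0.11 * Real.pi) ≤ Real.cos 0.345 := by
      apply Real.cos_le_cos_of_nonneg_of_le_pi
      · norm_num
      · nlinarith [Real.pi_pos]
      · nlinarith [Real.pi_gt_d2]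
    have h2 := (abs_le.mp (Real.cos_bound (x := 0.345) (by norm_num [abs_le]))).2
    rw [abs_of_pos (by norm_num)] at h2
    norm_num at h1 h2 ⊢
    linarith
  have hc0 : 0 ≤ Real.cos (0.11 * Real.pi) := by
    apply Real.cos_nonneg_of_mem_Icc
    constructor <;> nlinarith [Real.pi_pos]
  generalize Real.cos (0.11 * Real.pi) = c at hc0 hc1
  norm_num at hc1
  have hm : (2 * c - 1) ^ 2 + 7 * (2 * c - 2) < 0 := by nlinarith
  have hm2 : d * (2 * c - 2) ≤ 7 * (2 * c - 2) := by nlinarith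
  have hp : 0 < (2 * c - 2) ^ 2 := by nlinarith
  exact mul_neg_of_pos_of_neg hp (by linarith)
end

section
/- Let a, b be integers with a² + ab + b² ≥ 7, let ω = e^{0.11πi} ∈ ℂ, and let A = A(a,b) be the 4×4 matrix with rows (−1, 1, 0, 0), (0, −1, 0, 0), (0, 0, −1, 1), (a, b, 0, −1). Then the Hermitian matrix B = (1 − ω)·A + (1 − ω̄)·Aᵀ has exactly one positive eigenvalue and three negative eigenvalues (counted with multiplicity); in particular its signature equals −2. -/
open Matrix Complex

theorem aux_three_pos (p q r n : ℝ) (hp : 0 < p) (hq : 0 < q) (hr : 0 < r)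
    (h1 : p + q + r + n < 0)
    (h3 : 0 < p * q * r + p * q * n + p * r * n + q * r * n) : False := by
  have hpq := mul_pos hp hq
  have hpr := mul_pos hp hr
  have hqr := mul_pos hq hr
  have hpqr := mul_pos hpq hr
  have : 0 < (p * q + p * r + q * r) * (-(p + q + r + n)) := by
    apply mul_pos <;> linarith
  nlinarith [mul_pos hpq hp, mul_pos hpq hq, mul_pos hpr hp, mul_pos hpr hr,
    mul_pos hqr hq, mul_pos hqr hr]

theorem aux_count (x : Fin 4 → ℝ) (h1 : x 0 + x 1 + x 2 + x 3 < 0)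
    (h3 : 0 < x 0 * x 1 * x 2 + x 0 * x 1 * x 3 + x 0 * x 2 * x 3 + x 1 * x 2 * x 3)
    (h4 : x 0 * x 1 * x 2 * x 3 < 0) :
    (Finset.univ.filter fun i : Fin 4 => 0 < x i).card = 1 ∧
    (Finset.univ.filter fun i : Fin 4 => x i < 0).card = 3 := by
  simp only [Finset.card_filter, Fin.sum_univ_four]
  generalize x 0 = p at *
  generalize x 1 = q at *
  generalize x 2 = r at *
  generalize x 3 = n at *
  have hp : p ≠ 0 := by rintro rfl; simp at h4
  have hq : q ≠ 0 := by rintro rfl; simp at h4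
  have hr : r ≠ 0 := by rintro rfl; simp at h4
  have hn : n ≠ 0 := by rintro rfl; simp at h4
  rcases lt_or_gt_of_ne hp with hp | hp <;> rcases lt_or_gt_of_ne hq with hq | hq <;>
  rcases lt_or_gt_of_ne hr with hr | hr <;> rcases lt_or_gt_of_ne hn with hn | hn <;>
  first
  | (simp [hp, hq, hr, hn, hp.not_gt, hq.not_gt, hr.not_gt, hn.not_gt]; done)
  | (exfalso; linarith)
  | (exfalso; exact aux_three_pos p q r n hp hq hr (by linarith) (by linarith))
  | (exfalso; exact aux_three_pos p q n r hp hq hn (by linarith) (by linarith))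
  | (exfalso; exact aux_three_pos p r n q hp hr hn (by linarith) (by linarith))
  | (exfalso; exact aux_three_pos q r n p hq hr hn (by linarith) (by linarith))
  | (exfalso
     have hpq : 0 < p * q := by first | exact mul_pos hp hq | exact mul_pos_of_neg_of_neg hp hq
     have hrn : 0 < r * n := by first | exact mul_pos hr hn | exact mul_pos_of_neg_of_neg hr hn
     nlinarith [mul_pos hpq hrn])
  | (exfalso
     have hpq : p * q < 0 := by
       first | exact mul_neg_of_pos_of_neg hp hq | exact mul_neg_of_neg_of_pos hp hq
     have hrn : r * n < 0 := by
       first | exact mul_neg_of_pos_of_neg hr hn | exact mul_neg_of_neg_of_pos hr hn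
     nlinarith [mul_pos_of_neg_of_neg hpq hrn])

theorem aux_cos : Real.cos (0.11 * Real.pi) ≤ 0.942 ∧ 0.9 ≤ Real.cos (0.11 * Real.pi) := by
  have h1 := Real.pi_gt_d2
  have h2 := Real.pi_lt_d2
  constructor
  · have h : Real.cos (0.11 * Real.pi) ≤ Real.cos 0.3454 := by
      apply Real.cos_le_cos_of_nonneg_of_le_pi <;> linarith
    have hb := abs_le.1 (Real.cos_bound (x := 0.3454) (by norm_num [abs_le]))
    have := hb.2
    norm_num [abs_of_pos] at this h ⊢
    linarith
  · have := Real.one_sub_sq_div_two_le_cos (x := 0.11 * Real.pi)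
    nlinarith

theorem aux_det (s s' a b x t : ℂ) (h : s * s' = t) (h' : s + s' = t) :
    (x • (1 : Matrix (Fin 4) (Fin 4) ℂ) - (s • !![-1, 1, 0, 0; 0, -1, 0, 0; 0, 0, -1, 1; a, b, 0, -1] +
      s' • !![-1, 1, 0, 0; 0, -1, 0, 0; 0, 0, -1, 1; a, b, 0, -1]ᵀ)).det =
    x ^ 4 + 4 * t * x ^ 3 + (6 * t ^ 2 - 2 * t - t * (a ^ 2 + b ^ 2)) * x ^ 2
     - t ^ 2 * (4 * (1 - t) + 2 * a ^ 2 + a * b + 2 * b ^ 2) * x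
     + t ^ 2 * ((1 - t) ^ 2 - t * (a ^ 2 + a * b + b ^ 2)) := by
  obtain rfl : s' = t - s := by linear_combination h'
  have hs : s ^ 2 = t * s - t := by linear_combination -h
  have hs3 : s ^ 3 = (t * s - t) * s := by rw [← hs]; ring
  have hs4 : s ^ 4 = (t * s - t) ^ 2 := by rw [← hs]; ring
  simp [Matrix.det_succ_row_zero, Fin.sum_univ_succ, Fin.succAbove, Matrix.one_apply]
  ring_nf
  simp only [hs, hs3, hs4]
  ring_nf
  simp only [hs, hs3, hs4]
  ring_nf


theorem hermitian_signature_two_trefoil_plumbing (a b : ℤ)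
    (hd : 7 ≤ a ^ 2 + a * b + b ^ 2)
    (ω : ℂ) (hω : ω = Complex.exp ((0.11 * Real.pi : ℝ) * Complex.I))
    (A : Matrix (Fin 4) (Fin 4) ℂ)
    (hA : A = !![-1, 1, 0, 0; 0, -1, 0, 0; 0, 0, -1, 1; (a : ℂ), (b : ℂ), 0, -1]) :
    ∃ hB : ((1 - ω) • A + (1 - (starRingEnd ℂ) ω) • Aᵀ).IsHermitian,
      (Finset.univ.filter fun i : Fin 4 => 0 < hB.eigenvalues i).card = 1 ∧
      (Finset.univ.filter fun i : Fin 4 => hB.eigenvalues i < 0).card = 3 ∧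
      ((Finset.univ.filter fun i : Fin 4 => 0 < hB.eigenvalues i).card : ℤ) -
        ((Finset.univ.filter fun i : Fin 4 => hB.eigenvalues i < 0).card : ℤ) = -2 := by
  obtain ⟨hc1, hc2⟩ := aux_cos
  obtain ⟨c, hc⟩ : ∃ c, c = Real.cos (0.11 * Real.pi) := ⟨_, rfl⟩
  rw [← hc] at hc1 hc2
  have hre : ω.re = c := by rw [hω, Complex.exp_ofReal_mul_I_re, hc]
  have him : ω.im = Real.sin (0.11 * Real.pi) := by rw [hω, Complex.exp_ofReal_mul_I_im]
  have hadd : ω + (starRingEnd ℂ) ω = 2 * (c : ℂ) := by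
    rw [Complex.add_conj, hre]; push_cast; ring
  have hmul : ω * (starRingEnd ℂ) ω = 1 := by
    rw [Complex.mul_conj, Complex.normSq_apply, hre, him, hc]
    have := Real.sin_sq_add_cos_sq (0.11 * Real.pi)
    norm_cast
    linarith
  have hB : ((1 - ω) • A + (1 - (starRingEnd ℂ) ω) • Aᵀ).IsHermitian := by
    subst hA
    ext i j
    fin_cases i <;> fin_cases j <;> simp <;> ring
  refine ⟨hB, ?_⟩
  obtain ⟨t, ht⟩ : ∃ t : ℝ, t = 2 - 2 * c := ⟨_, rfl⟩
  have key : ∀ x : ℝ, (x - hB.eigenvalues 0) * (x - hB.eigenvalues 1) *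
      (x - hB.eigenvalues 2) * (x - hB.eigenvalues 3) =
      x ^ 4 + 4 * t * x ^ 3 + (6 * t ^ 2 - 2 * t - t * ((a : ℝ) ^ 2 + b ^ 2)) * x ^ 2
      - t ^ 2 * (4 * (1 - t) + 2 * (a : ℝ) ^ 2 + a * b + 2 * b ^ 2) * x
      + t ^ 2 * ((1 - t) ^ 2 - t * ((a : ℝ) ^ 2 + a * b + b ^ 2)) := by
    intro x
    have h1 := Matrix.eval_charpoly ((1 - ω) • A + (1 - (starRingEnd ℂ) ω) • Aᵀ) (x : ℂ)
    rw [hB.charpoly_eq, Polynomial.eval_prod, Fin.prod_univ_four] at h1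
    have h2 := aux_det (1 - ω) (1 - (starRingEnd ℂ) ω) a b x t
      (by rw [ht]; push_cast; linear_combination hmul - hadd)
      (by rw [ht]; push_cast; linear_combination - hadd)
    rw [← hA, Matrix.smul_one_eq_diagonal] at h2
    rw [Matrix.scalar_apply, h2] at h1
    simp only [Polynomial.eval_sub, Polynomial.eval_X, Polynomial.eval_C] at h1
    apply Complex.ofReal_injective
    push_cast
    exact h1
  have hdR : (7 : ℝ) ≤ (a : ℝ) ^ 2 + a * b + b ^ 2 := by exact_mod_cast hd
  have ht1 : 0.116 ≤ t := by rw [ht]; norm_num at hc1 ⊢; linarith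
  have ht2 : t ≤ 0.2 := by rw [ht]; norm_num at hc2 ⊢; linarith
  have htp : 0 < t := by norm_num at ht1; linarith
  have htt : 0 < t ^ 2 := by positivity
  have hneg : t ^ 2 * ((1 - t) ^ 2 - t * ((a : ℝ) ^ 2 + a * b + b ^ 2)) < 0 := by
    apply mul_neg_of_pos_of_neg htt
    have := mul_le_mul_of_nonneg_left hdR htp.le
    nlinarith
  have hpos : 0 < t ^ 2 * (4 * (1 - t) + 2 * (a : ℝ) ^ 2 + a * b + 2 * b ^ 2) := by
    apply mul_pos htt
    norm_num at ht2
    nlinarith [sq_nonneg (a : ℝ), sq_nonneg (b : ℝ)]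
  have k0 := key 0
  have k1 := key 1
  have k2 := key (-1)
  have k3 := key 2
  have k4 := key (-2)
  clear key
  obtain ⟨r1, r2⟩ := aux_count hB.eigenvalues (by linarith) (by linarith) (by linarith)
  exact ⟨r1, r2, by rw [r1, r2]; norm_num⟩
end
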